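/- For every β>1, the bifurcation set E_β has Lebesgue measure zero and Hausdorff dimension 1. -/

import Mathlib

open Set Filter MeasureTheory Topology

noncomputable section

/-- The β-transformation `x ↦ βx - ⌊βx⌋`. -/
def Tbeta (β x : ℝ) : ℝ := Int.fract (β * x)

/-- The survivor set `K_β(t)`: points of `[0,1)` whose orbit never enters `[0,t)`. -/
def survivor (β t : ℝ) : Set ℝ :=
  {x | x ∈ Set.Ico (0 : ℝ) 1 ∧ ∀ n : ℕ, t ≤ (Tbeta β)^[n] x}

/-- The set-valued bifurcation set `E_β`. -/
def Ebif (β : ℝ) : Set ℝ :=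
  {t | t ∈ Set.Ico (0 : ℝ) 1 ∧ ∀ t' : ℝ, t < t' → survivor β t' ≠ survivor β t}

/-- `(c)_β = Σ_{i≥1} c_i β^{-i}` for an infinite digit sequence (indexed from `0`). -/
def valSeq (β : ℝ) (c : ℕ → ℕ) : ℝ := ∑' i : ℕ, (c i : ℝ) / β ^ (i + 1)

/-- `(w 0^∞)_β` for a finite word `w`. -/
def valWord (β : ℝ) (w : List ℕ) : ℝ :=
  ∑ i ∈ Finset.range w.length, (w.getD i 0 : ℝ) / β ^ (i + 1)

/-- `w⁺`: increment the last letter of `w`. -/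
def wplus (w : List ℕ) : List ℕ := w.dropLast ++ [w.getLast! + 1]

/-- `w⁻`: decrement the last letter of `w`. -/
def wminus (w : List ℕ) : List ℕ := w.dropLast ++ [w.getLast! - 1]

/-- `θ`: increment every digit of `w` by one. -/
def theta (w : List ℕ) : List ℕ := w.map (· + 1)

/-- `L(w)`: the lexicographically largest cyclic permutation of `w`. -/
def maxCyc (w : List ℕ) : List ℕ := ((List.range w.length).map w.rotate).foldl max []

/-- `w^∞`: the periodic sequence with period block `w`. -/
def perSeq (w : List ℕ) : ℕ → ℕ := fun i => w.getD (i % w.length) 0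

/-- The sequence given by the word `w` followed by the sequence `c`. -/
def wordSeq (w : List ℕ) (c : ℕ → ℕ) : ℕ → ℕ :=
  fun i => if i < w.length then w.getD i 0 else c (i - w.length)

/-- Strict lexicographic order `≺` on sequences. -/
def seqLt (x y : ℕ → ℕ) : Prop := ∃ n, (∀ i < n, x i = y i) ∧ x n < y n

/-- Lexicographic order `≼` on sequences. -/
def seqLe (x y : ℕ → ℕ) : Prop := x = y ∨ seqLt x y

/-- The `n`-fold left shift `σⁿ` on sequences. -/
def shiftn (n : ℕ) (x : ℕ → ℕ) : ℕ → ℕ := fun i => x (i + n)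

/-- One step of the Farey recursion: insert the concatenation `w_i w_{i+1}`
between consecutive entries. -/
def fareyInsert : List (List ℕ) → List (List ℕ)
  | [] => []
  | [w] => [w]
  | w :: v :: rest => w :: (w ++ v) :: fareyInsert (v :: rest)

/-- The ordered set `F_n` of Farey words of level `n`. -/
def fareyLevel : ℕ → List (List ℕ)
  | 0 => [[0], [1]]
  | n + 1 => fareyInsert (fareyLevel n)

/-- `F`: all Farey words of length at least two. -/
def FareySet : Set (List ℕ) := {w | (∃ n, w ∈ fareyLevel n) ∧ w ≠ [0] ∧ w ≠ [1]}

/-- `F̂ = F ∪ {1}`. -/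
def FareyHat : Set (List ℕ) := FareySet ∪ {[1]}

/-- The extended Farey set `F_e = {θ^k(w) : w ∈ F̂, k ≥ 0}`. -/
def FareyExt : Set (List ℕ) := {w | ∃ v ∈ FareyHat, ∃ k : ℕ, w = theta^[k] v}

/-- A nonempty word is Lyndon iff it is strictly smaller than each of its nontrivial
cyclic rotations (equivalently: aperiodic and lexicographically smallest among its
cyclic permutations). -/
def IsLyndon (w : List ℕ) : Prop := w ≠ [] ∧ ∀ i, 0 < i → i < w.length → w < w.rotate i

/-- `L_e`: all Lyndon words over `ℕ ∪ {0}` except the single-letter word `0`. -/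
def LyndonExt : Set (List ℕ) := {w | IsLyndon w ∧ w ≠ [0]}

/-- `L`: Lyndon words over `{0,1}` of length at least `2`. -/
def LyndonBin : Set (List ℕ) := {w | IsLyndon w ∧ 2 ≤ w.length ∧ ∀ d ∈ w, d ≤ 1}

/-- The block of `Φ_s` emitted for current digit `d` after previous digit `p`:
`L(s)` for `00`, `s⁻` for `10`, `L(s)⁺` for `01`, `s` for `11`. -/
def phiBlock (s : List ℕ) (p d : ℕ) : List ℕ :=
  if d = 0 then (if p = 0 then maxCyc s else wminus s)
  else (if p = 0 then wplus (maxCyc s) else s)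

def phiAux (s : List ℕ) : ℕ → List ℕ → List ℕ
  | _, [] => []
  | p, d :: rest => phiBlock s p d ++ phiAux s d rest

/-- The substitution `Φ_s` on finite words; `s • r = subst s r`.  An initial digit `0`
produces `s⁻`, an initial digit `1` produces `L(s)⁺`, and thereafter runs
`0^k` resp. `1^l` produce `L(s)^{k-1}` resp. `s^{l-1}`, in accordance with
`Φ_s(0^{k₁}1^{l₁}…) = s⁻ L(s)^{k₁-1} L(s)⁺ s^{l₁-1} …` and
`Φ_s(1^{k₁}0^{l₁}…) = L(s)⁺ s^{k₁-1} s⁻ L(s)^{l₁-1} …`. -/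
def subst (s r : List ℕ) : List ℕ :=
  match r with
  | [] => []
  | d :: rest => phiBlock s (1 - d) d ++ phiAux s d rest

/-- The substitution `Φ_s` on infinite sequences, as the limit of its values
on initial segments (each digit contributes a nonempty block, so the `i`-th letter
is determined by the first `i+1` digits). -/
def phiSeq (s : List ℕ) (c : ℕ → ℕ) : ℕ → ℕ :=
  fun i => (subst s (List.ofFn fun j : Fin (i + 1) => c j)).getD i 0

/-- `Λ_e(m) = {s₁ • s₂ • … • s_m : s₁ ∈ F_e, s₂,…,s_m ∈ F}`. -/
def LambdaE (m : ℕ) : Set (List ℕ) :=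
  {w | ∃ s₁ ∈ FareyExt, ∃ rs : List (List ℕ),
    rs.length = m - 1 ∧ (∀ r ∈ rs, r ∈ FareySet) ∧ w = rs.foldl subst s₁}

/-- `Λ_e = ∪_{m≥1} Λ_e(m)`. -/
def LambdaExt : Set (List ℕ) := ⋃ m ∈ Set.Ici 1, LambdaE m

/-- `β_ℓ^S`: the base `β > 1` with `(L(S)^∞)_β = 1` (it is unique since
`β ↦ (c)_β` is strictly decreasing). -/
def betaL (S : List ℕ) : ℝ :=
  Classical.epsilon fun β : ℝ => 1 < β ∧ valSeq β (perSeq (maxCyc S)) = 1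

/-- `β_*^S`: the base `β > 1` with `(L(S)⁺ S⁻ L(S)^∞)_β = 1`. -/
def betaStar (S : List ℕ) : ℝ :=
  Classical.epsilon fun β : ℝ =>
    1 < β ∧ valSeq β (wordSeq (wplus (maxCyc S) ++ wminus S) (perSeq (maxCyc S))) = 1

/-- `β_r^S`: the base `β > 1` with `(L(S)⁺ S^∞)_β = 1`. -/
def betaR (S : List ℕ) : ℝ :=
  Classical.epsilon fun β : ℝ => 1 < β ∧ valSeq β (wordSeq (wplus (maxCyc S)) (perSeq S)) = 1

/-- The Lyndon/Farey interval `J^S = [β_ℓ^S, β_r^S]`. -/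
def Jint (S : List ℕ) : Set ℝ := Set.Icc (betaL S) (betaR S)

/-- The basic interval `I^S = [β_ℓ^S, β_*^S]`. -/
def Iint (S : List ℕ) : Set ℝ := Set.Icc (betaL S) (betaStar S)

/-- The exceptional set `E = (1,∞) ∖ ∪_{s ∈ F_e} J^s`. -/
def Eexc : Set ℝ := Set.Ioi 1 \ ⋃ s ∈ FareyExt, Jint s

/-- The relative exceptional set `E^S = (J^S ∖ I^S) ∖ ∪_{r ∈ F} J^{S•r}`. -/
def EexcRel (S : List ℕ) : Set ℝ :=
  (Jint S \ Iint S) \ ⋃ r ∈ FareySet, Jint (subst S r)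

/-- The infinitely renormalizable set `E_∞ = ∩_{m≥1} ∪_{S ∈ Λ_e(m)} J^S`. -/
def Einf : Set ℝ := ⋂ m ∈ Set.Ici 1, ⋃ S ∈ LambdaE m, Jint S

/-- `E_L = E ∪ {β_ℓ^s : s ∈ F_e}`. -/
def EL : Set ℝ := Eexc ∪ {x | ∃ s ∈ FareyExt, x = betaL s}

/-- The critical value `τ(β) = min{t > 0 : dim_H K_β(t) = 0}`. -/
def tau (β : ℝ) : ℝ := sInf {t : ℝ | 0 < t ∧ dimH (survivor β t) = 0}

end

/-!
By right continuity of the iterates of `T = T_β`, a point `t` lies in `E_β` exactly when it is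
minimal in its own orbit, i.e. when `t ∈ K_β(t)`.

*Measure.* Hence `E_β \ {0}` is covered by the sets `K_β(1/n)`. Around a point `x` of `K_β(δ)`,
`T^n` is affine of slope `β^n` on an interval containing `x` whose image starts at `0` and reaches
up to `T^n x ≥ δ`; the part mapped to `[0, δ)` is a hole of `K_β(δ)` of length `δ β^{-n}` within
distance `β^{-n}` of `x`. So `K_β(δ)` has no Lebesgue density point.

*Dimension.* At least `β^m / (m + 1)` of the intervals of monotonicity of `T^m` are full, that is,
mapped onto `[0, 1)`. Apart from two exceptions these may be concatenated freely, and the resulting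
Cantor set lies in `K_β(β^{-2m})`; its dimension tends to `1` as `m → ∞`. Finally
`β^{-N} K_β(β^{-N}) ⊆ E_β`, since the orbit of `β^{-N} x` first climbs through the points
`β^{-k} x` up to `x` and then stays above `β^{-N}`.
-/

section HausdorffDimension

theorem dimH_range_le_of_edist_le {X Y Z : Type*} [EMetricSpace Y] [EMetricSpace Z]
    {g : X → Y} {h : X → Z} {C r : NNReal} (hr : 0 < r)
    (hgh : ∀ c d, edist (h c) (h d) ≤ C * edist (g c) (g d) ^ (r : ℝ)) :
    dimH (range h) ≤ dimH (range g) / r := by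
  rcases isEmpty_or_nonempty X with _ | ⟨⟨c₀⟩⟩
  · simp only [range_eq_empty, dimH_empty, zero_le]
  have : Nonempty Z := ⟨h c₀⟩
  have hfactor : h.FactorsThrough g := fun c d hcd => by
    simpa [hcd, ENNReal.zero_rpow_of_pos (NNReal.coe_pos.2 hr)] using hgh c d
  obtain ⟨f, rfl⟩ := (Function.factorsThrough_iff h).1 hfactor
  have hf : HolderOnWith C r f (range g) := by
    rintro _ ⟨c, rfl⟩ _ ⟨d, rfl⟩
    exact hgh c d
  rw [range_comp]
  exact hf.dimH_image_le hr

theorem range_ofDigits_comp_equiv {ι : Type*} {b : ℕ} (e : ι ≃ Fin b) (hb : 1 < b) :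
    range (fun c : ℕ → ι => Real.ofDigits (e ∘ c)) = Icc 0 1 := by
  refine Subset.antisymm ?_ fun y hy => ?_
  · rintro _ ⟨c, rfl⟩
    exact ⟨Real.ofDigits_nonneg _, Real.ofDigits_le_one _⟩
  · obtain ⟨c, -, rfl⟩ := Real.ofDigits_SurjOn hb hy
    exact ⟨e.symm ∘ c, by simp only [← Function.comp_assoc, e.self_comp_symm, Function.id_comp]⟩

/-- Reading the letters as base-`Nat.card ι` digits makes `[0,1]` an `r`-Hölder image of
`range g`. -/
theorem le_dimH_range_of_le_dist {Y ι : Type*} [MetricSpace Y] [Finite ι] [Nontrivial ι]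
    {g : (ℕ → ι) → Y} {L ε : ℝ} {r : NNReal} (hL : 0 < L) (hε : 0 < ε)
    (hcard : L ^ (r : ℝ) ≤ Nat.card ι)
    (hdist : ∀ n c d, (∀ i < n, c i = d i) → c n ≠ d n → ε / L ^ n ≤ dist (g c) (g d)) :
    (r : ENNReal) ≤ dimH (range g) := by
  rcases eq_or_ne r 0 with rfl | hr
  · exact zero_le
  have hIcc : dimH (Icc (0 : ℝ) 1) = 1 := by
    rw [Real.dimH_of_nonempty_interior (by simp), Module.finrank_self, Nat.cast_one]
  let e := Finite.equivFin ι
  suffices ∀ c d : ℕ → ι, edist (Real.ofDigits (e ∘ c)) (Real.ofDigits (e ∘ d)) ≤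
      Real.toNNReal (ε⁻¹ ^ (r : ℝ)) * edist (g c) (g d) ^ (r : ℝ) by
    have hle := dimH_range_le_of_edist_le (pos_iff_ne_zero.2 hr) this
    rw [range_ofDigits_comp_equiv e Finite.one_lt_card, hIcc,
      ENNReal.le_div_iff_mul_le (by simp [hr]) (by simp), one_mul] at hle
    exact hle
  intro c d
  rcases eq_or_ne c d with rfl | hcd
  · simp only [edist_self, zero_le]
  set n := PiNat.firstDiff c d
  have hfirst : ∀ i < n, c i = d i := fun i hi => PiNat.apply_eq_of_lt_firstDiff hi
  have hfar := hdist n c d hfirst (PiNat.apply_firstDiff_ne hcd)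
  rw [edist_dist, edist_dist, ENNReal.ofReal_rpow_of_nonneg dist_nonneg r.coe_nonneg,
    ← ENNReal.ofReal_coe_nnreal, ← ENNReal.ofReal_mul NNReal.zero_le_coe,
    Real.coe_toNNReal _ (by positivity), ← Real.mul_rpow (by positivity) dist_nonneg]
  refine ENNReal.ofReal_le_ofReal ?_
  calc dist (Real.ofDigits (e ∘ c)) (Real.ofDigits (e ∘ d))
      ≤ ((Nat.card ι : ℝ) ^ n)⁻¹ :=
        Real.abs_ofDigits_sub_ofDigits_le fun i hi => congrArg e (hfirst i hi)
    _ ≤ ((L ^ (r : ℝ)) ^ n)⁻¹ := by gcongr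
    _ = (ε⁻¹ * (ε / L ^ n)) ^ (r : ℝ) := by
        rw [Real.rpow_pow_comm hL.le, ← Real.inv_rpow (by positivity)]
        congr 1
        field_simp
    _ ≤ (ε⁻¹ * dist (g c) (g d)) ^ (r : ℝ) := by gcongr

end HausdorffDimension

section Density

theorem measure_eq_zero_of_frequently_measure_inter_closedBall_le {α : Type*} [MetricSpace α]
    [SecondCountableTopology α] [MeasurableSpace α] [BorelSpace α] [HasBesicovitchCovering α]
    {μ : Measure α} [IsLocallyFiniteMeasure μ] {s : Set α} {c : ENNReal} (hc : c < 1)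
    (h : ∀ x ∈ s, ∃ᶠ r in 𝓝[>] (0 : ℝ),
      μ (s ∩ Metric.closedBall x r) ≤ c * μ (Metric.closedBall x r)) :
    μ s = 0 := by
  by_contra hs
  have hmem : ∃ᵐ x ∂μ.restrict s, x ∈ s := by
    rwa [frequently_ae_mem_iff, Measure.restrict_apply_self]
  obtain ⟨x, hx, hlim⟩ :=
    (hmem.and_eventually (Besicovitch.ae_tendsto_measure_inter_div μ s)).exists
  exact hc.not_ge <| le_of_tendsto_of_frequently hlim <|
    (h x hx).mono fun r hr => ENNReal.div_le_of_le_mul hr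

theorem volume_eq_zero_of_frequently_exists_disjoint_Ico {s : Set ℝ} {κ : ℝ} (hκ : 0 < κ)
    (h : ∀ x ∈ s, ∃ᶠ r in 𝓝[>] (0 : ℝ), ∃ a,
      Ico a (a + κ * r) ⊆ Metric.closedBall x r ∧ Disjoint s (Ico a (a + κ * r))) :
    volume s = 0 := by
  refine measure_eq_zero_of_frequently_measure_inter_closedBall_le
    (c := ENNReal.ofReal (1 - κ / 2)) (ENNReal.ofReal_lt_one.2 (by linarith)) fun x hx =>
      ((h x hx).and_eventually self_mem_nhdsWithin).mono ?_
  rintro r ⟨⟨a, hsub, hdisj⟩, hr : 0 < r⟩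
  calc volume (s ∩ Metric.closedBall x r)
      ≤ volume (Metric.closedBall x r \ Ico a (a + κ * r)) :=
        measure_mono fun y hy => ⟨hy.2, disjoint_left.1 hdisj hy.1⟩
    _ = ENNReal.ofReal (2 * r - κ * r) := by
        rw [measure_sdiff hsub measurableSet_Ico.nullMeasurableSet (by simp),
          Real.volume_closedBall, Real.volume_Ico, add_sub_cancel_left,
          ENNReal.ofReal_sub _ (by positivity)]
    _ = ENNReal.ofReal (1 - κ / 2) * volume (Metric.closedBall x r) := by
        rw [Real.volume_closedBall, ← ENNReal.ofReal_mul' (by positivity)]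
        congr 1
        ring

end Density

variable {β : ℝ}

section Tbeta

theorem Tbeta_mem_Ico (β x : ℝ) : Tbeta β x ∈ Ico (0 : ℝ) 1 :=
  ⟨Int.fract_nonneg _, Int.fract_lt_one _⟩

theorem Tbeta_iterate_mem_Ico (β : ℝ) {x : ℝ} (hx : x ∈ Ico (0 : ℝ) 1) (n : ℕ) :
    (Tbeta β)^[n] x ∈ Ico (0 : ℝ) 1 :=
  MapsTo.iterate (fun y _ => Tbeta_mem_Ico β y) n hx

theorem Tbeta_iterate_nonneg (β : ℝ) {x : ℝ} (hx : 0 ≤ x) (n : ℕ) : 0 ≤ (Tbeta β)^[n] x :=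
  MapsTo.iterate (s := Ici 0) (fun y _ => (Tbeta_mem_Ico β y).1) n hx

theorem Tbeta_iterate_le (hβ : 0 ≤ β) {x : ℝ} (hx : 0 ≤ x) (n : ℕ) :
    (Tbeta β)^[n] x ≤ β ^ n * x := by
  induction n with
  | zero => simp
  | succ n ih =>
    have hT := mul_nonneg hβ (Tbeta_iterate_nonneg β hx n)
    rw [Function.iterate_succ_apply', pow_succ', mul_assoc]
    exact (sub_le_self _ (Int.cast_nonneg (Int.floor_nonneg.2 hT))).trans (by gcongr)

theorem tendsto_Tbeta_nhdsGE (hβ : 0 ≤ β) (x : ℝ) :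
    Tendsto (Tbeta β) (𝓝[≥] x) (𝓝[≥] (Tbeta β x)) := by
  have hmul : Tendsto (β * ·) (𝓝[≥] x) (𝓝[≥] (β * x)) :=
    tendsto_nhdsWithin_of_tendsto_nhds_of_eventually_within _
      ((continuous_const_mul β).tendsto' x _ rfl |>.mono_left nhdsWithin_le_nhds)
      (eventually_mem_nhdsWithin.mono fun y hy => mul_le_mul_of_nonneg_left hy hβ)
  have hfloor : ∀ᶠ y in 𝓝[≥] (β * x), ⌊y⌋ = ⌊β * x⌋ :=
    tendsto_pure.1 (tendsto_floor_right_pure_floor (β * x))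
  have hsub : Tendsto (· - (⌊β * x⌋ : ℝ)) (𝓝[≥] (β * x)) (𝓝[≥] (Tbeta β x)) :=
    tendsto_nhdsWithin_of_tendsto_nhds_of_eventually_within _
      ((continuous_sub_right _).tendsto' _ _ rfl |>.mono_left nhdsWithin_le_nhds)
      (eventually_mem_nhdsWithin.mono fun y hy =>
        mem_Ici.2 (sub_le_sub_right (mem_Ici.1 hy) (⌊β * x⌋ : ℝ)))
  refine (hsub.congr' ?_).comp hmul
  filter_upwards [hfloor] with y hy
  rw [← hy, Int.self_sub_floor]

theorem tendsto_Tbeta_iterate_nhdsGE (hβ : 0 ≤ β) (x : ℝ) (n : ℕ) :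
    Tendsto (Tbeta β)^[n] (𝓝[≥] x) (𝓝[≥] ((Tbeta β)^[n] x)) := by
  induction n with
  | zero => exact tendsto_id
  | succ n ih =>
    rw [Function.iterate_succ', Function.comp_apply]
    exact (tendsto_Tbeta_nhdsGE hβ _).comp ih

end Tbeta

section SurvivorSets

theorem survivor_antitone (β : ℝ) : Antitone (survivor β) :=
  fun _ _ hst _ hx => ⟨hx.1, fun n => hst.trans (hx.2 n)⟩

theorem Tbeta_iterate_mem_survivor {t x : ℝ} (hx : x ∈ survivor β t) (n : ℕ) :
    (Tbeta β)^[n] x ∈ survivor β t :=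
  ⟨Tbeta_iterate_mem_Ico β hx.1 n, fun k => by
    rw [← Function.iterate_add_apply]; exact hx.2 (k + n)⟩

/-- If `T^n t < t`, then by right continuity `T^n` sends some `[t, t')` below `t`, so no
survivor of the hole `[0, t)` ever visits `[t, t')`. -/
theorem mem_Ebif_iff (hβ : 0 ≤ β) {t : ℝ} : t ∈ Ebif β ↔ t ∈ survivor β t := by
  refine ⟨fun ⟨ht, hbif⟩ => ⟨ht, fun n => ?_⟩, fun ht => ⟨ht.1, fun t' htt' heq => ?_⟩⟩
  · by_contra! hn
    have hev : ∀ᶠ y in 𝓝[≥] t, (Tbeta β)^[n] y < t :=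
      ((tendsto_Tbeta_iterate_nhdsGE hβ t n).mono_right nhdsWithin_le_nhds).eventually_lt_const hn
    obtain ⟨t', htt' : t < t', hsub⟩ := mem_nhdsGE_iff_exists_Ico_subset.1 hev
    refine hbif t' htt' (Subset.antisymm (survivor_antitone β htt'.le) fun x hx => ⟨hx.1, ?_⟩)
    intro k
    by_contra! hk
    have hvisit := Tbeta_iterate_mem_survivor hx k
    exact (hvisit.2 n).not_gt (hsub ⟨hvisit.2 0, hk⟩)
  · have ht' : t ∈ survivor β t' := heq ▸ ht
    exact (ht'.2 0).not_gt htt'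

theorem mem_survivor_of_forall_le_iterate_mul (hβ : 1 ≤ β) {m : ℕ} (hm : 0 < m) {t x : ℝ}
    (hx : x ∈ Ico (0 : ℝ) 1) (h : ∀ q, β ^ m * t ≤ (Tbeta β)^[m * q] x) : x ∈ survivor β t := by
  refine ⟨hx, fun k => ?_⟩
  have hT := Tbeta_iterate_nonneg β hx.1 k
  have hnext : m * (k / m + 1) = (m - k % m) + k := by
    have hdiv := Nat.div_add_mod k m
    have hmod := Nat.mod_lt k hm
    rw [Nat.mul_succ]
    lia
  refine le_of_mul_le_mul_left ?_ (pow_pos (by linarith : 0 < β) m)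
  calc β ^ m * t ≤ (Tbeta β)^[m * (k / m + 1)] x := h _
    _ = (Tbeta β)^[m - k % m] ((Tbeta β)^[k] x) := by rw [hnext, Function.iterate_add_apply]
    _ ≤ β ^ (m - k % m) * (Tbeta β)^[k] x := Tbeta_iterate_le (by linarith) hT _
    _ ≤ β ^ m * (Tbeta β)^[k] x := by gcongr; exacts [Nat.sub_le _ _]

end SurvivorSets

/-- `T_β^m` restricts to an increasing affine bijection of slope `β^m` from the subinterval
`[a, a + ℓ/β^m)` of `[0,1)` onto `[0, ℓ)`. The points of the interval are written `a + u/β^m`,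
so that `u` is the value of `T_β^m`. -/
def IsBranch (β : ℝ) (m : ℕ) (a ℓ : ℝ) : Prop :=
  ∀ u ∈ Ico 0 ℓ, a + u / β ^ m ∈ Ico (0 : ℝ) 1 ∧ (Tbeta β)^[m] (a + u / β ^ m) = u

/-- Left endpoints of the full cylinders of order `m`, i.e. of the intervals of length `β^{-m}`
that `T_β^m` maps affinely onto `[0,1)`. -/
def fullLeft (β : ℝ) (m : ℕ) : Set ℝ := {a | IsBranch β m a 1}

section Branches

variable {m : ℕ} {a ℓ : ℝ}

theorem isBranch_zero (β : ℝ) (hℓ : ℓ ≤ 1) : IsBranch β 0 0 ℓ := fun u hu => by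
  simpa using ⟨hu.1, hu.2.trans_le hℓ⟩

theorem IsBranch.length_le_one (h : IsBranch β m a ℓ) : ℓ ≤ 1 := by
  by_contra! hℓ
  obtain ⟨hmem, hT⟩ := h 1 ⟨zero_le_one, hℓ⟩
  exact (Tbeta_iterate_mem_Ico β hmem m).2.ne hT

theorem IsBranch.mem_and_iterate_eq (hβ : 0 < β) (h : IsBranch β m a ℓ) {x : ℝ}
    (hx : x ∈ Ico a (a + ℓ / β ^ m)) :
    x ∈ Ico (0 : ℝ) 1 ∧ (Tbeta β)^[m] x = β ^ m * (x - a) := by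
  have hβm : 0 < β ^ m := pow_pos hβ m
  have hu : β ^ m * (x - a) ∈ Ico 0 ℓ :=
    ⟨mul_nonneg hβm.le (sub_nonneg.2 hx.1), by rw [← lt_div_iff₀' hβm]; linarith [hx.2]⟩
  simpa only [mul_div_cancel_left₀ _ hβm.ne', add_sub_cancel] using h _ hu

theorem IsBranch.disjoint_survivor (hβ : 0 < β) {δ : ℝ} (h : IsBranch β m a δ) :
    Disjoint (survivor β δ) (Ico a (a + δ / β ^ m)) := by
  refine disjoint_left.2 fun x hx hxI => (hx.2 m).not_gt ?_
  rw [(h.mem_and_iterate_eq hβ hxI).2, ← lt_div_iff₀' (pow_pos hβ m)]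
  linarith [hxI.2]

theorem IsBranch.mono {ℓ' : ℝ} (h : IsBranch β m a ℓ) (hℓ : ℓ' ≤ ℓ) : IsBranch β m a ℓ' :=
  fun u hu => h u ⟨hu.1, hu.2.trans_le hℓ⟩

theorem IsBranch.succ (hβ : 0 < β) (h : IsBranch β m a ℓ) {d : ℤ} (hd : 0 ≤ d) {ℓ' : ℝ}
    (hℓ' : ℓ' ≤ 1) (hle : d + ℓ' ≤ β * ℓ) : IsBranch β (m + 1) (a + d / β ^ (m + 1)) ℓ' := by
  intro u hu
  have hd' : (0 : ℝ) ≤ d := Int.cast_nonneg hd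
  have hz : (d + u) / β ∈ Ico 0 ℓ :=
    ⟨div_nonneg (add_nonneg hd' hu.1) hβ.le, by rw [div_lt_iff₀' hβ]; linarith [hu.2]⟩
  have hpoint : a + d / β ^ (m + 1) + u / β ^ (m + 1) = a + (d + u) / β / β ^ m := by
    rw [pow_succ]; field_simp; ring
  obtain ⟨hmem, hT⟩ := h _ hz
  rw [hpoint, Function.iterate_succ_apply', hT, Tbeta, mul_div_cancel₀ _ hβ.ne',
    Int.fract_intCast_add, Int.fract_eq_self.2 ⟨hu.1, hu.2.trans_le hℓ'⟩]
  exact ⟨hmem, rfl⟩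

theorem IsBranch.last (hβ : 0 < β) (h : IsBranch β m a ℓ) (hℓ : 0 ≤ ℓ) :
    IsBranch β (m + 1) (a + ⌊β * ℓ⌋ / β ^ (m + 1)) (Tbeta β ℓ) :=
  h.succ hβ (Int.floor_nonneg.2 (mul_nonneg hβ.le hℓ)) (Tbeta_mem_Ico β ℓ).2.le
    (Int.floor_add_fract _).le

theorem isBranch_iterate (hβ : 0 < β) {x : ℝ} (hx : x ∈ Icc (0 : ℝ) 1) (n : ℕ) :
    IsBranch β n (x - (Tbeta β)^[n] x / β ^ n) ((Tbeta β)^[n] x) := by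
  induction n with
  | zero => simpa using isBranch_zero β hx.2
  | succ n ih =>
    convert ih.last hβ (Tbeta_iterate_nonneg β hx.1 n) using 1
    · rw [Function.iterate_succ_apply', Tbeta, ← Int.self_sub_floor, pow_succ]
      field_simp
      ring
    · exact Function.iterate_succ_apply' _ _ _

end Branches

section MeasureZero

theorem volume_survivor_eq_zero (hβ : 1 < β) {δ : ℝ} (hδ : 0 < δ) : volume (survivor β δ) = 0 := by
  have hβ0 : 0 < β := by linarith
  have hradii : Tendsto (fun n : ℕ => (β ^ n)⁻¹) atTop (𝓝[>] 0) :=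
    tendsto_nhdsWithin_iff.2 ⟨(tendsto_pow_atTop_atTop_of_one_lt hβ).inv_tendsto_atTop,
      Eventually.of_forall fun n => inv_pos.2 (pow_pos hβ0 n)⟩
  refine volume_eq_zero_of_frequently_exists_disjoint_Ico hδ fun x hx =>
    hradii.frequently (Frequently.of_forall fun n => ?_)
  have hT := Tbeta_iterate_mem_Ico β hx.1 n
  set τ := (Tbeta β)^[n] x
  have hhole : IsBranch β n (x - τ / β ^ n) δ :=
    (isBranch_iterate hβ0 (Ico_subset_Icc_self hx.1) n).mono (hx.2 n)
  have hδτ : δ / β ^ n ≤ τ / β ^ n := by gcongr; exact hx.2 n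
  have hτ : τ / β ^ n ≤ (β ^ n)⁻¹ := by rw [← one_div]; gcongr; exact hT.2.le
  have hr : 0 < (β ^ n)⁻¹ := inv_pos.2 (pow_pos hβ0 n)
  rw [← div_eq_mul_inv]
  refine ⟨x - τ / β ^ n, ?_, hhole.disjoint_survivor hβ0⟩
  rw [Real.closedBall_eq_Icc]
  exact Ico_subset_Icc_self.trans (Icc_subset_Icc (by linarith) (by linarith))

theorem volume_Ebif_eq_zero (hβ : 1 < β) : volume (Ebif β) = 0 := by
  have hsub : Ebif β ⊆ {0} ∪ ⋃ n : ℕ, survivor β (1 / ((n : ℝ) + 1)) := by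
    intro t ht
    have hts := (mem_Ebif_iff (by linarith)).1 ht
    rcases hts.1.1.eq_or_lt with h0 | hpos
    · exact Or.inl h0.symm
    · obtain ⟨n, hn⟩ := exists_nat_one_div_lt hpos
      exact Or.inr (mem_iUnion.2 ⟨n, survivor_antitone β hn.le hts⟩)
  exact measure_mono_null hsub <| measure_union_null (by simp) <| measure_iUnion_null fun n =>
    volume_survivor_eq_zero hβ (by positivity)

end MeasureZero

section FullCylinders

variable {m : ℕ} {a b : ℝ}

theorem fullLeft_subset_Ico (β : ℝ) (m : ℕ) : fullLeft β m ⊆ Ico 0 1 := fun a ha => by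
  simpa using (ha 0 ⟨le_rfl, zero_lt_one⟩).1

theorem iterate_eq_zero_of_mem_fullLeft (ha : a ∈ fullLeft β m) : (Tbeta β)^[m] a = 0 := by
  simpa using (ha 0 ⟨le_rfl, zero_lt_one⟩).2

theorem fullLeft_subset_Icc (hβ : 0 < β) (m : ℕ) : fullLeft β m ⊆ Icc 0 (1 - 1 / β ^ m) := by
  refine fun a ha => ⟨(fullLeft_subset_Ico β m ha).1, le_sub_iff_add_le.2 ?_⟩
  by_contra! h
  have h1 : (1 : ℝ) ∈ Ico a (a + 1 / β ^ m) := ⟨(fullLeft_subset_Ico β m ha).2.le, h⟩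
  exact (ha.mem_and_iterate_eq hβ h1).1.2.false

theorem add_one_div_le_of_mem_fullLeft (hβ : 0 < β) (ha : a ∈ fullLeft β m)
    (hb : b ∈ fullLeft β m) (hab : a < b) : a + 1 / β ^ m ≤ b := by
  by_contra! h
  have hT := (ha.mem_and_iterate_eq hβ ⟨hab.le, h⟩).2
  rw [iterate_eq_zero_of_mem_fullLeft hb] at hT
  exact (mul_pos (pow_pos hβ m) (sub_pos.2 hab)).ne hT

theorem fullLeft_finite (hβ : 0 < β) (m : ℕ) : (fullLeft β m).Finite := by
  have hβm : 0 < β ^ m := pow_pos hβ m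
  have hmaps : MapsTo (fun a => ⌊β ^ m * a⌋) (fullLeft β m) (Icc 0 ⌊β ^ m⌋) := fun a ha =>
    have ha' := fullLeft_subset_Ico β m ha
    ⟨Int.floor_nonneg.2 (mul_nonneg hβm.le ha'.1),
      Int.floor_le_floor (mul_le_of_le_one_right hβm.le ha'.2.le)⟩
  refine Finite.of_injOn hmaps (fun a ha b hb hab => ?_) (finite_Icc _ _)
  by_contra hne
  wlog hlt : a < b generalizing a b
  · exact this b hb a ha hab.symm (Ne.symm hne) (lt_of_le_of_ne (not_lt.1 hlt) (Ne.symm hne))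
  have hgap := add_one_div_le_of_mem_fullLeft hβ ha hb hlt
  have hclose := (abs_lt.1 (Int.abs_sub_lt_one_of_floor_eq_floor hab)).1
  rw [← le_sub_iff_add_le', div_le_iff₀' hβm] at hgap
  linarith

theorem fullLeft_mono (hβ : 1 ≤ β) : Monotone (fullLeft β) := by
  refine monotone_nat_of_le_succ fun m a (ha : IsBranch β m a 1) => ?_
  have hsucc := ha.succ (by linarith) le_rfl le_rfl (by simpa using hβ)
  rwa [Int.cast_zero, zero_div, add_zero] at hsucc

theorem zero_mem_fullLeft (hβ : 1 ≤ β) (m : ℕ) : (0 : ℝ) ∈ fullLeft β m :=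
  fullLeft_mono hβ (Nat.zero_le m) (isBranch_zero β le_rfl)

theorem Tbeta_iterate_div_pow (hβ : 1 ≤ β) {u : ℝ} (hu : u ∈ Ico (0 : ℝ) 1) (m : ℕ) :
    (Tbeta β)^[m] (u / β ^ m) = u := by
  simpa using (zero_mem_fullLeft hβ m u hu).2

theorem IsBranch.mem_full_or_mem_last (hβ : 0 < β) {ℓ : ℝ} (h : IsBranch β m a ℓ) {x : ℝ}
    (hx : x ∈ Ico a (a + ℓ / β ^ m)) :
    (∃ b ∈ fullLeft β (m + 1), x ∈ Ico b (b + 1 / β ^ (m + 1))) ∨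
      x ∈ Ico (a + ⌊β * ℓ⌋ / β ^ (m + 1))
        (a + ⌊β * ℓ⌋ / β ^ (m + 1) + Tbeta β ℓ / β ^ (m + 1)) := by
  have hβm : 0 < β ^ (m + 1) := pow_pos hβ _
  have hscale : ∀ b s : ℝ, x ∈ Ico (a + b / β ^ (m + 1)) (a + b / β ^ (m + 1) + s / β ^ (m + 1)) ↔
      β ^ (m + 1) * (x - a) ∈ Ico b (b + s) := fun b s => by
    rw [add_assoc, ← add_div, mem_Ico, mem_Ico, ← le_sub_iff_add_le', ← sub_lt_iff_lt_add',
      div_le_iff₀' hβm, lt_div_iff₀' hβm]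
  have hxℓ : β ^ (m + 1) * (x - a) ∈ Ico 0 (β * ℓ) := by
    have hlt : x - a < ℓ / β ^ m := by linarith [hx.2]
    rw [lt_div_iff₀' (pow_pos hβ m)] at hlt
    rw [pow_succ', mul_assoc]
    exact ⟨by have := sub_nonneg.2 hx.1; positivity, by gcongr⟩
  simp_rw [hscale, Tbeta, Int.floor_add_fract]
  set y := β ^ (m + 1) * (x - a)
  rcases lt_or_ge y ⌊β * ℓ⌋ with hy | hy
  · refine Or.inl ⟨a + ⌊y⌋ / β ^ (m + 1), h.succ hβ (Int.floor_nonneg.2 hxℓ.1) le_rfl ?_, ?_⟩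
    · exact (mod_cast Int.floor_lt.2 hy : (⌊y⌋ : ℝ) + 1 ≤ ⌊β * ℓ⌋).trans (Int.floor_le _)
    · exact (hscale _ _).2 ⟨Int.floor_le y, Int.lt_floor_add_one y⟩
  · exact Or.inr ⟨hy, hxℓ.2⟩

/-- Passing from order `m` to `m + 1` keeps one branch per old branch and otherwise only adds
full ones, so the number of branches is at most `∑ k ≤ m, #(fullLeft β k)`. -/
theorem exists_branch_cover (hβ : 1 ≤ β) (m : ℕ) :
    ∃ B : Finset (ℝ × ℝ), B.card ≤ (m + 1) * (fullLeft β m).ncard ∧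
      (∀ p ∈ B, 0 ≤ p.2 ∧ IsBranch β m p.1 p.2) ∧
      Ico (0 : ℝ) 1 ⊆ ⋃ p ∈ B, Ico p.1 (p.1 + p.2 / β ^ m) := by
  classical
  have hβ0 : 0 < β := by linarith
  induction m with
  | zero =>
    refine ⟨{(0, 1)}, ?_, by simpa using isBranch_zero β le_rfl, by simp⟩
    rw [Finset.card_singleton, zero_add, one_mul]
    exact (ncard_pos (fullLeft_finite hβ0 0)).2 ⟨0, zero_mem_fullLeft hβ 0⟩
  | succ m ih =>
    obtain ⟨B, hcard, hB, hcover⟩ := ih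
    have hfin := fullLeft_finite hβ0 (m + 1)
    let full : Finset (ℝ × ℝ) := hfin.toFinset.image fun b => (b, 1)
    let last : Finset (ℝ × ℝ) := B.image fun p => (p.1 + ⌊β * p.2⌋ / β ^ (m + 1), Tbeta β p.2)
    refine ⟨full ∪ last, ?_, ?_, fun x hx => ?_⟩
    · calc (full ∪ last).card ≤ full.card + last.card := Finset.card_union_le _ _
        _ ≤ (fullLeft β (m + 1)).ncard + (m + 1) * (fullLeft β m).ncard := by
            rw [ncard_eq_toFinset_card _ hfin]
            exact add_le_add Finset.card_image_le (Finset.card_image_le.trans hcard)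
        _ ≤ (fullLeft β (m + 1)).ncard + (m + 1) * (fullLeft β (m + 1)).ncard := by
            gcongr
            exact fullLeft_mono hβ m.le_succ
        _ = (m + 1 + 1) * (fullLeft β (m + 1)).ncard := by ring
    · simp only [full, last, Finset.mem_union, Finset.mem_image, Finite.mem_toFinset]
      rintro _ (⟨b, hb, rfl⟩ | ⟨p, hp, rfl⟩)
      · exact ⟨zero_le_one, hb⟩
      · exact ⟨(Tbeta_mem_Ico β _).1, (hB p hp).2.last hβ0 (hB p hp).1⟩
    · obtain ⟨p, hp, hxp⟩ := mem_iUnion₂.1 (hcover hx)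
      rcases (hB p hp).2.mem_full_or_mem_last hβ0 hxp with ⟨b, hb, hxb⟩ | hlast
      · exact mem_iUnion₂.2 ⟨(b, 1), Finset.mem_union_left _
          (Finset.mem_image_of_mem _ (hfin.mem_toFinset.2 hb)), hxb⟩
      · exact mem_iUnion₂.2 ⟨_, Finset.mem_union_right _ (Finset.mem_image_of_mem _ hp), hlast⟩

theorem pow_le_mul_ncard_fullLeft (hβ : 1 ≤ β) (m : ℕ) :
    β ^ m ≤ (m + 1) * (fullLeft β m).ncard := by
  have hβm : 0 < β ^ m := pow_pos (by linarith) m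
  obtain ⟨B, hcard, hB, hcover⟩ := exists_branch_cover hβ m
  have hvol : ENNReal.ofReal 1 ≤ ENNReal.ofReal (B.card * (1 / β ^ m)) :=
    calc ENNReal.ofReal 1 = volume (Ico (0 : ℝ) 1) := by rw [Real.volume_Ico, sub_zero]
      _ ≤ ∑ p ∈ B, volume (Ico p.1 (p.1 + p.2 / β ^ m)) :=
          (measure_mono hcover).trans (measure_biUnion_finset_le _ _)
      _ ≤ ∑ _p ∈ B, ENNReal.ofReal (1 / β ^ m) := by
          refine Finset.sum_le_sum fun p hp => ?_
          rw [Real.volume_Ico, add_sub_cancel_left]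
          have hlen := (hB p hp).2.length_le_one
          gcongr
      _ = ENNReal.ofReal (B.card * (1 / β ^ m)) := by
          rw [Finset.sum_const, nsmul_eq_mul, ENNReal.ofReal_mul (Nat.cast_nonneg _),
            ENNReal.ofReal_natCast]
  rw [ENNReal.ofReal_le_ofReal_iff (by positivity), mul_one_div, one_le_div₀ hβm] at hvol
  exact hvol.trans (mod_cast hcard)

theorem eventually_rpow_add_le_ncard_fullLeft (hβ : 1 < β) {r : ℝ} (hr0 : 0 ≤ r) (hr : r < 1)
    {K : ℝ} (hK : 0 ≤ K) : ∀ᶠ m : ℕ in atTop, (β ^ m) ^ r + K ≤ (fullLeft β m).ncard := by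
  have hβ0 : 0 < β := by linarith
  have hρ : 1 < β ^ (1 - r) := Real.one_lt_rpow hβ (by linarith)
  have hlim := tendsto_pow_const_div_const_pow_of_one_lt 1 hρ
  filter_upwards [hlim.eventually_le_const (by positivity : 0 < 1 / (2 * (1 + K))),
    eventually_ge_atTop 1] with m hm hm1
  have hm1' : (1 : ℝ) ≤ m := mod_cast hm1
  rw [pow_one, div_le_div_iff₀ (by positivity) (by positivity), one_mul] at hm
  have hone : 1 ≤ (β ^ m) ^ r := Real.one_le_rpow (one_le_pow₀ hβ.le) hr0
  refine le_of_mul_le_mul_left (a := (m : ℝ) + 1) ?_ (by positivity)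
  calc ((m : ℝ) + 1) * ((β ^ m) ^ r + K) ≤ (m + m) * ((β ^ m) ^ r + K * (β ^ m) ^ r) := by
        gcongr
        exact le_mul_of_one_le_right hK hone
    _ = (β ^ m) ^ r * (m * (2 * (1 + K))) := by ring
    _ ≤ (β ^ m) ^ r * (β ^ (1 - r)) ^ m := by gcongr
    _ = β ^ m := by
        rw [← Real.rpow_pow_comm hβ0.le, ← mul_pow, ← Real.rpow_add hβ0, add_sub_cancel,
          Real.rpow_one]
    _ ≤ (m + 1) * (fullLeft β m).ncard := pow_le_mul_ncard_fullLeft hβ.le m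

end FullCylinders

/-- The sum `∑ cᵢ L⁻ⁱ`. The real digits are meant to be left endpoints of intervals of length
`L⁻¹` in `[0,1)`; accordingly `c 0` is not divided by `L`. -/
noncomputable def digitSeries (L : ℝ) (c : ℕ → ℝ) : ℝ := ∑' i, c i / L ^ i

section DigitSeries

variable {L : ℝ} {c d : ℕ → ℝ}

theorem digit_div_pow_le (hL : 0 < L) (hc : ∀ i, c i ∈ Icc 0 (1 - 1 / L)) (i : ℕ) :
    c i / L ^ i ≤ (1 - L⁻¹) * L⁻¹ ^ i := by
  rw [inv_pow, ← div_eq_mul_inv, ← one_div]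
  gcongr
  exact (hc i).2

theorem summable_digitSeries (hL : 1 < L) (hc : ∀ i, c i ∈ Icc 0 (1 - 1 / L)) :
    Summable fun i => c i / L ^ i := by
  have hL0 : 0 < L := by linarith
  exact Summable.of_nonneg_of_le (fun i => div_nonneg (hc i).1 (by positivity))
    (digit_div_pow_le hL0 hc)
    ((summable_geometric_of_lt_one (inv_nonneg.2 hL0.le) (inv_lt_one_of_one_lt₀ hL)).mul_left _)

theorem digitSeries_eq_add (hL : 1 < L) (hc : ∀ i, c i ∈ Icc 0 (1 - 1 / L)) :
    digitSeries L c = c 0 + digitSeries L (fun i => c (i + 1)) / L := by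
  simp only [digitSeries, (summable_digitSeries hL hc).tsum_eq_zero_add, ← tsum_div_const,
    pow_zero, div_one, pow_succ, div_div]

theorem digitSeries_mem_Icc (hL : 1 < L) (hc : ∀ i, c i ∈ Icc 0 (1 - 1 / L)) :
    digitSeries L c ∈ Icc (0 : ℝ) 1 := by
  have hL0 : 0 < L := by linarith
  have hinv : L⁻¹ < 1 := inv_lt_one_of_one_lt₀ hL
  have hgeom := (hasSum_geometric_of_lt_one (inv_nonneg.2 hL0.le) hinv).mul_left (1 - L⁻¹)
  rw [mul_inv_cancel₀ (sub_pos.2 hinv).ne'] at hgeom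
  exact ⟨tsum_nonneg fun i => div_nonneg (hc i).1 (by positivity),
    hasSum_le (digit_div_pow_le hL0 hc) (summable_digitSeries hL hc).hasSum hgeom⟩

theorem digitSeries_mem_Icc_add (hL : 1 < L) (hc : ∀ i, c i ∈ Icc 0 (1 - 1 / L)) :
    digitSeries L c ∈ Icc (c 0) (c 0 + 1 / L) := by
  have hL0 : 0 < L := by linarith
  have htail := digitSeries_mem_Icc hL fun i => hc (i + 1)
  rw [digitSeries_eq_add hL hc]
  exact ⟨le_add_of_nonneg_right (div_nonneg htail.1 hL0.le), by gcongr; exact htail.2⟩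

theorem one_div_sq_le_digitSeries_sub (hL : 1 < L) (hc : ∀ i, c i ∈ Icc 0 (1 - 1 / L))
    (hd : ∀ i, d i ∈ Icc (1 / L) (1 - 1 / L)) (hcd : c 0 + 1 / L ≤ d 0) :
    1 / L ^ 2 ≤ digitSeries L d - digitSeries L c := by
  have hL0 : 0 < L := by linarith
  have hd' : ∀ i, d i ∈ Icc 0 (1 - 1 / L) :=
    fun i => ⟨(one_div_pos.2 hL0).le.trans (hd i).1, (hd i).2⟩
  have htail : 1 / L ≤ digitSeries L (fun i => d (i + 1)) :=
    (hd 1).1.trans (digitSeries_mem_Icc_add hL fun i => hd' (i + 1)).1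
  have htail' : 1 / L ^ 2 ≤ digitSeries L (fun i => d (i + 1)) / L := by
    rw [pow_two, ← div_div]
    gcongr
  rw [digitSeries_eq_add hL hd']
  linarith [(digitSeries_mem_Icc_add hL hc).2]

theorem one_div_pow_le_abs_digitSeries_sub (hL : 1 < L) {D : Set ℝ}
    (hD : D ⊆ Icc (1 / L) (1 - 1 / L)) (hsep : ∀ a ∈ D, ∀ b ∈ D, a < b → a + 1 / L ≤ b) (n : ℕ)
    (hc : ∀ i, c i ∈ D) (hd : ∀ i, d i ∈ D) (hlt : ∀ i < n, c i = d i) (hne : c n ≠ d n) :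
    1 / L ^ (n + 2) ≤ |digitSeries L c - digitSeries L d| := by
  have hL0 : 0 < L := by linarith
  have hD' : D ⊆ Icc 0 (1 - 1 / L) := hD.trans (Icc_subset_Icc_left (one_div_pos.2 hL0).le)
  induction n generalizing c d with
  | zero =>
    wlog h : c 0 < d 0 generalizing c d
    · rw [abs_sub_comm]
      exact this hd hc (by simp) hne.symm (lt_of_le_of_ne (not_lt.1 h) hne.symm)
    rw [abs_sub_comm]
    exact (one_div_sq_le_digitSeries_sub hL (fun i => hD' (hc i)) (fun i => hD (hd i))
      (hsep _ (hc 0) _ (hd 0) h)).trans (le_abs_self _)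
  | succ n ih =>
    have htail := ih (fun i => hc (i + 1)) (fun i => hd (i + 1))
      (fun i hi => hlt (i + 1) (Nat.succ_lt_succ hi)) hne
    rw [digitSeries_eq_add hL fun i => hD' (hc i), digitSeries_eq_add hL fun i => hD' (hd i),
      hlt 0 n.succ_pos, add_sub_add_left_eq_sub, ← sub_div, abs_div, abs_of_pos hL0,
      Nat.add_right_comm, pow_succ, ← div_div]
    gcongr

end DigitSeries

/-- Left endpoints of the full cylinders of order `m` that neither start in the leftmost
interval of length `β^{-m}` nor touch `1`. -/
def innerLeft (β : ℝ) (m : ℕ) : Set ℝ := fullLeft β m ∩ Ico (1 / β ^ m) (1 - 1 / β ^ m)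

section Concatenation

variable {m : ℕ}

theorem innerLeft_finite (hβ : 0 < β) (m : ℕ) : (innerLeft β m).Finite :=
  (fullLeft_finite hβ m).inter_of_left _

theorem ncard_fullLeft_le_ncard_innerLeft_add_two (hβ : 1 ≤ β) (m : ℕ) :
    (fullLeft β m).ncard ≤ (innerLeft β m).ncard + 2 := by
  have hβ0 : 0 < β := by linarith
  have hsub : fullLeft β m \ {0, 1 - 1 / β ^ m} ⊆ innerLeft β m := by
    rintro a ⟨ha, hne⟩
    obtain ⟨hne0, hne1⟩ := not_or.1 hne
    have hmem := fullLeft_subset_Icc hβ0 m ha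
    have hgap := add_one_div_le_of_mem_fullLeft hβ0 (zero_mem_fullLeft hβ m) ha
      (lt_of_le_of_ne hmem.1 (Ne.symm hne0))
    exact ⟨ha, by rwa [zero_add] at hgap, lt_of_le_of_ne hmem.2 hne1⟩
  calc (fullLeft β m).ncard
      ≤ (fullLeft β m \ {0, 1 - 1 / β ^ m}).ncard + ({0, 1 - 1 / β ^ m} : Set ℝ).ncard :=
        ncard_le_ncard_sdiff_add_ncard _ _
    _ ≤ (innerLeft β m).ncard + 2 :=
        add_le_add (ncard_le_ncard hsub (innerLeft_finite hβ0 m))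
          ((ncard_insert_le _ _).trans_eq (by rw [ncard_singleton]))

theorem digitSeries_mem_survivor (hβ : 1 < β) (hm : 0 < m) {c : ℕ → ℝ}
    (hc : ∀ i, c i ∈ innerLeft β m) :
    digitSeries (β ^ m) c ∈ survivor β (1 / β ^ (m + m)) := by
  have hβ0 : 0 < β := by linarith
  have hL : 1 < β ^ m := one_lt_pow₀ hβ hm.ne'
  have hc' : ∀ i, c i ∈ Icc 0 (1 - 1 / β ^ m) := fun i => fullLeft_subset_Icc hβ0 m (hc i).1
  have hmem : ∀ q, digitSeries (β ^ m) (fun i => c (i + q)) ∈ Ico (1 / β ^ m) 1 := fun q => by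
    have hsum := digitSeries_mem_Icc_add hL fun i => hc' (i + q)
    have hc0 := (hc (0 + q)).2
    exact ⟨hc0.1.trans hsum.1, by linarith [hsum.2, hc0.2]⟩
  have hIco : ∀ q, digitSeries (β ^ m) (fun i => c (i + q)) ∈ Ico (0 : ℝ) 1 := fun q =>
    ⟨(by positivity : 0 ≤ 1 / β ^ m).trans (hmem q).1, (hmem q).2⟩
  have hshift : ∀ q, (Tbeta β)^[m * q] (digitSeries (β ^ m) c) =
      digitSeries (β ^ m) (fun i => c (i + q)) := fun q => by
    induction q with
    | zero => rfl
    | succ q ih =>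
      rw [Nat.mul_succ, Nat.add_comm, Function.iterate_add_apply, ih,
        digitSeries_eq_add hL fun i => hc' (i + q)]
      simpa only [zero_add, add_right_comm, add_assoc] using ((hc (0 + q)).1 _ (hIco (q + 1))).2
  refine mem_survivor_of_forall_le_iterate_mul hβ.le hm (hIco 0) fun q => ?_
  calc β ^ m * (1 / β ^ (m + m)) = 1 / β ^ m := by rw [pow_add]; field_simp
    _ ≤ (Tbeta β)^[m * q] (digitSeries (β ^ m) c) := (hshift q).symm ▸ (hmem q).1

theorem le_dimH_survivor (hβ : 1 < β) (hm : 0 < m) {r : NNReal}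
    (hnontriv : (innerLeft β m).Nontrivial)
    (hcard : (β ^ m) ^ (r : ℝ) ≤ (innerLeft β m).ncard) :
    (r : ENNReal) ≤ dimH (survivor β (1 / β ^ (m + m))) := by
  have hβ0 : 0 < β := by linarith
  have hL : 1 < β ^ m := one_lt_pow₀ hβ hm.ne'
  have hfin : Finite (innerLeft β m) := innerLeft_finite hβ0 m
  have hnon : Nontrivial (innerLeft β m) := nontrivial_coe_sort.2 hnontriv
  let g : (ℕ → innerLeft β m) → ℝ := fun c => digitSeries (β ^ m) fun i => c i
  have hsub : range g ⊆ survivor β (1 / β ^ (m + m)) :=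
    range_subset_iff.2 fun c => digitSeries_mem_survivor hβ hm fun i => (c i).2
  refine (le_dimH_range_of_le_dist (g := g) (L := β ^ m) (ε := 1 / (β ^ m) ^ 2)
    (by positivity) (by positivity) hcard fun n c d hlt hne => ?_).trans (dimH_mono hsub)
  have hfar := one_div_pow_le_abs_digitSeries_sub hL
    (inter_subset_right.trans Ico_subset_Icc_self)
    (fun a ha b hb => add_one_div_le_of_mem_fullLeft hβ0 ha.1 hb.1) n
    (fun i => (c i).2) (fun i => (d i).2) (fun i hi => congrArg Subtype.val (hlt i hi))
    (Subtype.coe_injective.ne hne)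
  rwa [div_div, ← pow_add, add_comm 2, Real.dist_eq]

theorem exists_le_dimH_survivor (hβ : 1 < β) {r : NNReal} (hr : r < 1) :
    ∃ N : ℕ, (r : ENNReal) ≤ dimH (survivor β (1 / β ^ N)) := by
  obtain ⟨m, hcard, hm⟩ := ((eventually_rpow_add_le_ncard_fullLeft hβ r.coe_nonneg
    (by exact_mod_cast hr) (by norm_num : (0 : ℝ) ≤ 3)).and (eventually_gt_atTop 0)).exists
  have hinner : ((fullLeft β m).ncard : ℝ) ≤ (innerLeft β m).ncard + 2 :=
    mod_cast ncard_fullLeft_le_ncard_innerLeft_add_two hβ.le m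
  have hpow : 0 < (β ^ m) ^ (r : ℝ) := by positivity
  have htwo : (1 : ℝ) < (innerLeft β m).ncard := by linarith
  have hnontriv := (one_lt_ncard_iff_nontrivial_and_finite.1 (mod_cast htwo)).1
  exact ⟨m + m, le_dimH_survivor hβ hm hnontriv (by linarith)⟩

end Concatenation

section Bifurcation

theorem div_pow_mem_Ebif (hβ : 1 ≤ β) {x : ℝ} {N : ℕ} (hx : x ∈ survivor β (1 / β ^ N)) :
    x / β ^ N ∈ Ebif β := by
  have hβ0 : 0 < β := by linarith
  have hdiv : ∀ k, x / β ^ k ∈ Ico (0 : ℝ) 1 := fun k =>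
    ⟨div_nonneg hx.1.1 (by positivity),
      (div_le_self hx.1.1 (one_le_pow₀ hβ)).trans_lt hx.1.2⟩
  refine (mem_Ebif_iff hβ0.le).2 ⟨hdiv N, fun k => ?_⟩
  rcases le_total k N with hk | hk
  · obtain ⟨j, rfl⟩ := Nat.exists_eq_add_of_le' hk
    rw [pow_add, ← div_div, Tbeta_iterate_div_pow hβ (hdiv j)]
    exact div_le_self (hdiv j).1 (one_le_pow₀ hβ)
  · obtain ⟨j, rfl⟩ := Nat.exists_eq_add_of_le' hk
    rw [Function.iterate_add_apply, Tbeta_iterate_div_pow hβ hx.1]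
    exact le_trans (by gcongr; exact hx.1.2.le) (hx.2 j)

theorem dimH_survivor_le_dimH_Ebif (hβ : 1 ≤ β) (N : ℕ) :
    dimH (survivor β (1 / β ^ N)) ≤ dimH (Ebif β) := by
  have hβN : β ^ N ≠ 0 := (pow_pos (by linarith) N).ne'
  have hsub : (fun x => x / β ^ N) '' survivor β (1 / β ^ N) ⊆ Ebif β :=
    image_subset_iff.2 fun x hx => div_pow_mem_Ebif hβ hx
  calc dimH (survivor β (1 / β ^ N))
      = dimH ((fun x => x / β ^ N) '' survivor β (1 / β ^ N)) := by
        simp_rw [div_eq_inv_mul]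
        exact (ContinuousLinearEquiv.dimH_image
          (ContinuousLinearEquiv.smulLeft (Units.mk0 _ (inv_ne_zero hβN)) : ℝ ≃L[ℝ] ℝ) _).symm
    _ ≤ dimH (Ebif β) := dimH_mono hsub

end Bifurcation

/-- For every `β > 1`, the bifurcation set `E_β` has Lebesgue measure
zero and Hausdorff dimension `1`. -/
theorem bifurcation_set_null_full_dim (β : ℝ) (hβ : 1 < β) :
    MeasureTheory.volume (Ebif β) = 0 ∧ dimH (Ebif β) = 1 := by
  have hupper : dimH (Ebif β) ≤ 1 := (dimH_mono (subset_univ _)).trans_eq Real.dimH_univ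
  have hlower : 1 ≤ dimH (Ebif β) := ENNReal.le_of_forall_nnreal_lt fun r hr => by
    obtain ⟨N, hN⟩ := exists_le_dimH_survivor hβ (r := r) (mod_cast hr)
    exact hN.trans (dimH_survivor_le_dimH_Ebif hβ.le N)
  exact ⟨volume_Ebif_eq_zero hβ, le_antisymm hupper hlower⟩
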